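/- arXiv:1108.5930 — 2 statements merged into one kernel-verified Lean document; each statement's English description precedes it below -/
import Mathlib

section
/- Let L be a linear pencil in n variables. Then the spectrahedron S_L is bounded (as a subset of ℝⁿ) if and only if the quadratic module M_L associated to L is archimedean. -/
open MvPolynomial Matrix

/-- The linear pencil `L = A 0 + X 1 * A 1 + ... + X n * A n` as a symmetric matrix
with entries in the polynomial ring `ℝ[X 1, ..., X n]`. -/
noncomputable def pencilPoly {n m : ℕ} (A : Fin (n+1) → Matrix (Fin m) (Fin m) ℝ) :
    Matrix (Fin m) (Fin m) (MvPolynomial (Fin n) ℝ) :=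
  fun a b => MvPolynomial.C (A 0 a b) + ∑ i : Fin n, MvPolynomial.X i * MvPolynomial.C (A i.succ a b)

/-- Evaluation of the pencil at a point `x ∈ ℝⁿ`. -/
def pencilEval {n m : ℕ} (A : Fin (n+1) → Matrix (Fin m) (Fin m) ℝ) (x : Fin n → ℝ) :
    Matrix (Fin m) (Fin m) ℝ :=
  A 0 + ∑ i : Fin n, x i • A i.succ

/-- The spectrahedron `S_L = {x ∈ ℝⁿ ∣ L(x) ⪰ 0}`. -/
def specSet {n m : ℕ} (A : Fin (n+1) → Matrix (Fin m) (Fin m) ℝ) : Set (Fin n → ℝ) :=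
  {x | (pencilEval A x).PosSemidef}

/-- `vᵀ L v` for a vector `v` of polynomials. -/
noncomputable def vLv {n m : ℕ} (A : Fin (n+1) → Matrix (Fin m) (Fin m) ℝ)
    (v : Fin m → MvPolynomial (Fin n) ℝ) : MvPolynomial (Fin n) ℝ :=
  ∑ a : Fin m, ∑ b : Fin m, v a * pencilPoly A a b * v b

/-- Membership in the quadratic module `M_L` associated to the pencil `L`:
`p = s + Σⱼ vⱼᵀ L vⱼ` with `s` a sum of squares. -/
def memQM {n m : ℕ} (A : Fin (n+1) → Matrix (Fin m) (Fin m) ℝ)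
    (p : MvPolynomial (Fin n) ℝ) : Prop :=
  ∃ (k r : ℕ) (q : Fin k → MvPolynomial (Fin n) ℝ)
    (v : Fin r → Fin m → MvPolynomial (Fin n) ℝ),
    p = ∑ i, (q i)^2 + ∑ j, vLv A (v j)

/-- The quadratic module `M_L` is archimedean: for every polynomial `f` there is `N ∈ ℕ`
with `N - f² ∈ M_L`. -/
def archimedeanQM {n m : ℕ} (A : Fin (n+1) → Matrix (Fin m) (Fin m) ℝ) : Prop :=
  ∀ f : MvPolynomial (Fin n) ℝ, ∃ N : ℕ, memQM A ((N : MvPolynomial (Fin n) ℝ) - f^2)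

/-- In a finite-dimensional real normed space the convex hull of a compact set is compact. -/
theorem IsCompact.convexHull_of_finiteDimensional {E : Type*} [NormedAddCommGroup E]
    [NormedSpace ℝ E] [FiniteDimensional ℝ E] {s : Set E} (hs : IsCompact s) :
    IsCompact (convexHull ℝ s) := by
  rcases s.eq_empty_or_nonempty with rfl | ⟨s₀, hs₀⟩
  · simp
  let ι := Fin (Module.finrank ℝ E + 1)
  have hK : IsCompact (stdSimplex ℝ ι ×ˢ Set.univ.pi fun _ : ι => s) :=
    (isCompact_stdSimplex ℝ ι).prod (isCompact_univ_pi fun _ => hs)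
  have hcont : Continuous fun y : (ι → ℝ) × (ι → E) => ∑ i, y.1 i • y.2 i := by fun_prop
  convert hK.image hcont using 1
  ext x
  constructor
  · intro hx
    obtain ⟨κ, _, z, w, hz, hind, hw, hw1, rfl⟩ := eq_pos_convex_span_of_mem_convexHull hx
    have hcard : Fintype.card κ ≤ Fintype.card ι := by
      simpa [ι] using hind.card_le_finrank_succ.trans
        (Nat.succ_le_succ (Submodule.finrank_le _))
    obtain ⟨e⟩ := Function.Embedding.nonempty_of_card_le hcard
    have hw' (i) (hi : i ∉ Set.range e) : Function.extend e w 0 i = 0 :=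
      Function.extend_apply' _ _ _ hi
    refine ⟨(Function.extend e w 0, Function.extend e z fun _ => s₀), ⟨⟨fun i => ?_, ?_⟩, ?_⟩, ?_⟩
    · by_cases hi : i ∈ Set.range e
      · obtain ⟨k, rfl⟩ := hi
        simpa [e.injective.extend_apply] using (hw k).le
      · simp [hw' i hi]
    · rw [← hw1]
      exact (Fintype.sum_of_injective e e.injective _ _ hw'
        fun k => (e.injective.extend_apply _ _ _).symm).symm
    · intro i _
      by_cases hi : i ∈ Set.range e
      · obtain ⟨k, rfl⟩ := hi
        simpa [e.injective.extend_apply] using hz ⟨k, rfl⟩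
      · simpa [Function.extend_apply' _ _ _ hi] using hs₀
    · exact (Fintype.sum_of_injective e e.injective _ _ (fun i hi => by simp [hw' i hi])
        fun k => by simp [e.injective.extend_apply]).symm
  · rintro ⟨⟨w, z⟩, ⟨⟨hw, hw1⟩, hz⟩, rfl⟩
    exact (convex_convexHull ℝ s).sum_mem (fun i _ => hw i) hw1
      fun i _ => subset_convexHull ℝ s (hz i trivial)

/-- A quadratic module of a commutative ring. -/
structure IsQuadraticModule {R : Type*} [CommRing R] (M : Set R) : Prop where
  one_mem : 1 ∈ M
  add_mem : ∀ {f g}, f ∈ M → g ∈ M → f + g ∈ M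
  sq_mul_mem : ∀ (a) {f}, f ∈ M → a ^ 2 * f ∈ M

namespace IsQuadraticModule

theorem sq_mem {R : Type*} [CommRing R] {M : Set R} (hM : IsQuadraticModule M) (a : R) : a ^ 2 ∈ M := by
  simpa using hM.sq_mul_mem a hM.one_mem

variable {R : Type*} [CommRing R] [Algebra ℝ R] {M : Set R}

theorem smul_mem (hM : IsQuadraticModule M) {c : ℝ} (hc : 0 ≤ c) {f : R} (hf : f ∈ M) :
    c • f ∈ M := by
  have h := hM.sq_mul_mem (algebraMap ℝ R √c) hf
  rwa [← map_pow, Real.sq_sqrt hc, ← Algebra.smul_def] at h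

theorem algebraMap_mem (hM : IsQuadraticModule M) {c : ℝ} (hc : 0 ≤ c) :
    algebraMap ℝ R c ∈ M := by
  simpa [Algebra.smul_def] using hM.smul_mem hc hM.one_mem

theorem mul_mem_of_neg_mem (hM : IsQuadraticModule M) {f : R} (hf : f ∈ M) (hf' : -f ∈ M)
    (h : R) : h * f ∈ M := by
  have key := hM.add_mem (hM.sq_mul_mem ((1 / 2 : ℝ) • (h + 1)) hf)
    (hM.sq_mul_mem ((1 / 2 : ℝ) • (h - 1)) hf')
  convert key using 1
  simp only [Algebra.smul_def]
  have h2 : (algebraMap ℝ R (1 / 2)) * 2 = 1 := by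
    rw [← map_ofNat (algebraMap ℝ R) 2, ← map_mul]; norm_num
  linear_combination (-h * f * (algebraMap ℝ R (1 / 2) * 2 + 1)) * h2

/-- The ideal of all `g` whose multiples are all infinitesimally nonnegative with respect
to `M`. -/
def infinitesimalIdeal (hM : IsQuadraticModule M) : Ideal R where
  carrier := {g | ∀ (h : R) (ε : ℝ), 0 < ε → h * g + algebraMap ℝ R ε ∈ M}
  zero_mem' h ε hε := by simpa using hM.algebraMap_mem hε.le
  add_mem' {a b} ha hb h ε hε := by
    have := hM.add_mem (ha h (ε / 2) (half_pos hε)) (hb h (ε / 2) (half_pos hε))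
    convert this using 1
    rw [← add_halves ε, map_add]
    ring_nf
  smul_mem' c g hg h ε hε := by
    simpa [mul_assoc] using hg (h * c) ε hε

theorem add_algebraMap_mem (hM : IsQuadraticModule M) {g : R} (hg : g ∈ hM.infinitesimalIdeal)
    {ε : ℝ} (hε : 0 < ε) : g + algebraMap ℝ R ε ∈ M := by
  simpa using hg 1 ε hε

/-- The quadratic module `M` enlarged by its infinitesimal ideal. -/
def enlarge (hM : IsQuadraticModule M) : Set R :=
  {f | ∃ m ∈ M, ∃ g ∈ hM.infinitesimalIdeal, f = m + g}

theorem subset_enlarge (hM : IsQuadraticModule M) {f : R} (hf : f ∈ M) : f ∈ hM.enlarge :=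
  ⟨f, hf, 0, zero_mem _, by simp⟩

theorem infinitesimalIdeal_subset_enlarge (hM : IsQuadraticModule M) {f : R}
    (hf : f ∈ hM.infinitesimalIdeal) : f ∈ hM.enlarge :=
  ⟨0, by simpa using hM.sq_mem 0, f, hf, by simp⟩

theorem isQuadraticModule_enlarge (hM : IsQuadraticModule M) : IsQuadraticModule hM.enlarge where
  one_mem := hM.subset_enlarge hM.one_mem
  add_mem := by
    rintro _ _ ⟨m, hm, g, hg, rfl⟩ ⟨m', hm', g', hg', rfl⟩
    exact ⟨m + m', hM.add_mem hm hm', g + g', Submodule.add_mem _ hg hg', by ring⟩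
  sq_mul_mem := by
    rintro a _ ⟨m, hm, g, hg, rfl⟩
    exact ⟨_, hM.sq_mul_mem a hm, _, Ideal.mul_mem_left _ (a ^ 2) hg, by ring⟩

theorem add_algebraMap_mem_of_mem_enlarge (hM : IsQuadraticModule M) {f : R}
    (hf : f ∈ hM.enlarge) {ε : ℝ} (hε : 0 < ε) : f + algebraMap ℝ R ε ∈ M := by
  obtain ⟨m, hm, g, hg, rfl⟩ := hf
  rw [add_assoc]
  exact hM.add_mem hm (hM.add_algebraMap_mem hg hε)

theorem mem_infinitesimalIdeal_of_neg_mem (hM : IsQuadraticModule M) {f : R}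
    (hf : f ∈ hM.enlarge) (hf' : -f ∈ hM.enlarge) : f ∈ hM.infinitesimalIdeal :=
  fun h _ hε => hM.add_algebraMap_mem_of_mem_enlarge
    (hM.isQuadraticModule_enlarge.mul_mem_of_neg_mem hf hf' h) hε

theorem mem_infinitesimalIdeal_of_neg_sq_mem (hM : IsQuadraticModule M) {f : R}
    (hf : -f ^ 2 ∈ hM.enlarge) : f ∈ hM.infinitesimalIdeal := by
  intro h ε hε
  have hM' := hM.isQuadraticModule_enlarge
  have h1 := hM'.smul_mem (c := ε⁻¹ / 2) (by positivity)
    (hM'.add_mem (hM'.sq_mem (h * f + algebraMap ℝ R ε)) (hM'.sq_mul_mem h hf))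
  have h2 := hM.add_algebraMap_mem_of_mem_enlarge h1 (half_pos hε)
  convert h2 using 1
  have e1 : algebraMap ℝ R (ε⁻¹ / 2) * algebraMap ℝ R ε * 2 = 1 := by
    rw [← map_ofNat (algebraMap ℝ R) 2, ← map_mul, ← map_mul, ← map_one (algebraMap ℝ R)]
    congr 1
    field_simp
  have e2 : algebraMap ℝ R ε = algebraMap ℝ R (ε / 2) * 2 := by
    rw [← map_ofNat (algebraMap ℝ R) 2, ← map_mul]
    congr 1
    ring
  rw [Algebra.smul_def]
  linear_combination (-(h * f) - algebraMap ℝ R (ε / 2)) * e1 +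
    (1 - algebraMap ℝ R (ε⁻¹ / 2) * algebraMap ℝ R ε) * e2

/-- `f` is bounded with respect to `M`. -/
def IsBoundedElem (M : Set R) (f : R) : Prop :=
  ∃ N : ℝ, 0 < N ∧ algebraMap ℝ R N + f ∈ M ∧ algebraMap ℝ R N - f ∈ M

theorem isBoundedElem_algebraMap (hM : IsQuadraticModule M) (c : ℝ) :
    IsBoundedElem M (algebraMap ℝ R c) := by
  refine ⟨|c| + 1, by positivity, ?_, ?_⟩
  · rw [← map_add]
    exact hM.algebraMap_mem (by linarith [neg_abs_le c])
  · rw [← map_sub]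
    exact hM.algebraMap_mem (by linarith [le_abs_self c])

theorem IsBoundedElem.add (hM : IsQuadraticModule M) {f g : R} (hf : IsBoundedElem M f)
    (hg : IsBoundedElem M g) : IsBoundedElem M (f + g) := by
  obtain ⟨N, hN, h1, h2⟩ := hf
  obtain ⟨N', hN', h1', h2'⟩ := hg
  refine ⟨N + N', by positivity, ?_, ?_⟩
  · convert hM.add_mem h1 h1' using 1
    rw [map_add]; ring
  · convert hM.add_mem h2 h2' using 1
    rw [map_add]; ring

theorem IsBoundedElem.smul (hM : IsQuadraticModule M) {c : ℝ} (hc : 0 < c) {f : R}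
    (hf : IsBoundedElem M f) : IsBoundedElem M (c • f) := by
  obtain ⟨N, hN, h1, h2⟩ := hf
  refine ⟨c * N, by positivity, ?_, ?_⟩
  · convert hM.smul_mem hc.le h1 using 1
    rw [map_mul, Algebra.smul_def, Algebra.smul_def]; ring
  · convert hM.smul_mem hc.le h2 using 1
    rw [map_mul, Algebra.smul_def, Algebra.smul_def]; ring

theorem IsBoundedElem.neg {f : R} (hf : IsBoundedElem M f) :
    IsBoundedElem M (-f) := by
  obtain ⟨N, hN, h1, h2⟩ := hf
  exact ⟨N, hN, by rwa [← sub_eq_add_neg], by rwa [sub_neg_eq_add]⟩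

theorem IsBoundedElem.exists_sub_sq_mem (hM : IsQuadraticModule M) {f : R}
    (hf : IsBoundedElem M f) : ∃ N : ℝ, 0 < N ∧ algebraMap ℝ R N - f ^ 2 ∈ M := by
  obtain ⟨N, hN, h1, h2⟩ := hf
  refine ⟨N ^ 2, by positivity, ?_⟩
  convert hM.smul_mem (c := N⁻¹ / 2) (by positivity)
    (hM.add_mem (hM.sq_mul_mem (algebraMap ℝ R N + f) h2)
      (hM.sq_mul_mem (algebraMap ℝ R N - f) h1)) using 1
  have e1 : algebraMap ℝ R (N⁻¹ / 2) * algebraMap ℝ R N * 2 = 1 := by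
    rw [← map_ofNat (algebraMap ℝ R) 2, ← map_mul, ← map_mul, ← map_one (algebraMap ℝ R)]
    congr 1
    field_simp
  rw [Algebra.smul_def, map_pow]
  linear_combination (f ^ 2 - algebraMap ℝ R N ^ 2) * e1

theorem IsBoundedElem.sq (hM : IsQuadraticModule M) {f : R} (hf : IsBoundedElem M f) :
    IsBoundedElem M (f ^ 2) := by
  obtain ⟨N, hN, h⟩ := hf.exists_sub_sq_mem hM
  exact ⟨N, hN, hM.add_mem (hM.algebraMap_mem hN.le) (hM.sq_mem f), h⟩

theorem IsBoundedElem.mul (hM : IsQuadraticModule M) {f g : R} (hf : IsBoundedElem M f)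
    (hg : IsBoundedElem M g) : IsBoundedElem M (f * g) := by
  have key := (((hf.add hM hg).sq hM).add hM ((hf.add hM hg.neg).sq hM).neg).smul hM
    (c := 1 / 4) (by norm_num)
  convert key using 1
  have h4 : (algebraMap ℝ R (1 / 4)) * 4 = 1 := by
    rw [← map_ofNat (algebraMap ℝ R) 4, ← map_mul]; norm_num
  rw [Algebra.smul_def]
  linear_combination (-f * g) * h4

end IsQuadraticModule

/-- The elements of a convex cone whose negatives lie outside of it form a convex set. -/
theorem convex_setOf_mem_and_neg_notMem {V : Type*} [AddCommGroup V] [Module ℝ V] {K : Set V}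
    (hadd : ∀ {y z}, y ∈ K → z ∈ K → y + z ∈ K)
    (hsmul : ∀ {c : ℝ} {y}, 0 ≤ c → y ∈ K → c • y ∈ K) :
    Convex ℝ {y | y ∈ K ∧ -y ∉ K} := by
  have key {y z : V} {a b : ℝ} (hy : -y ∉ K) (hz : z ∈ K) (ha : 0 < a) (hb : 0 ≤ b) :
      -(a • y + b • z) ∉ K := by
    intro h
    refine hy ?_
    convert hsmul (inv_nonneg.2 ha.le) (hadd h (hsmul hb hz)) using 1
    rw [neg_add_rev, add_comm (-(b • z)), neg_add_cancel_right, smul_neg, inv_smul_smul₀ ha.ne']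
  intro y hy z hz a b ha hb hab
  refine ⟨hadd (hsmul ha hy.1) (hsmul hb hz.1), ?_⟩
  rcases ha.eq_or_lt with rfl | ha
  · rw [add_comm]
    exact key hz.2 hy.1 (by linarith) le_rfl
  · exact key hy.2 hz.1 ha hb

section Pencil

variable {n m : ℕ} (A : Fin (n + 1) → Matrix (Fin m) (Fin m) ℝ)

/-- The affine polynomial with given coefficient vector. -/
noncomputable def affinePoly (n : ℕ) : (Fin (n + 1) → ℝ) →ₗ[ℝ] MvPolynomial (Fin n) ℝ :=
  Fintype.linearCombination ℝ (Fin.cons 1 X)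

theorem affinePoly_apply (y : Fin (n + 1) → ℝ) :
    affinePoly n y = C (y 0) + ∑ i : Fin n, X i * C (y i.succ) := by
  simp [affinePoly, Fintype.linearCombination_apply, Fin.sum_univ_succ, smul_eq_C_mul, mul_comm]

/-- The coefficient vector of the affine polynomial `vᵀ L w`. -/
def pencilForm (v w : Fin m → ℝ) : Fin (n + 1) → ℝ := fun i => v ⬝ᵥ A i *ᵥ w

/-- The symmetric bilinear form `vᵀ L w` on vectors of polynomials. -/
noncomputable def pencilPolyForm (v w : Fin m → MvPolynomial (Fin n) ℝ) :
    MvPolynomial (Fin n) ℝ :=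
  v ⬝ᵥ pencilPoly A *ᵥ w

theorem vLv_eq (v : Fin m → MvPolynomial (Fin n) ℝ) : vLv A v = pencilPolyForm A v v := by
  simp [vLv, pencilPolyForm, dotProduct, mulVec, Finset.mul_sum, mul_assoc]

variable {A}

theorem pencilForm_comm (hsymm : ∀ i, (A i).IsSymm) (v w : Fin m → ℝ) :
    pencilForm A v w = pencilForm A w v := by
  ext i
  rw [pencilForm, pencilForm, dotProduct_mulVec, ← mulVec_transpose, (hsymm i).eq, dotProduct_comm]

theorem pencilPolyForm_comm (hsymm : ∀ i, (A i).IsSymm) (v w : Fin m → MvPolynomial (Fin n) ℝ) :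
    pencilPolyForm A v w = pencilPolyForm A w v := by
  have h : (pencilPoly A)ᵀ = pencilPoly A := by
    ext1 a b
    simp [pencilPoly, fun i => (hsymm i).apply a b]
  rw [pencilPolyForm, pencilPolyForm, dotProduct_mulVec, ← mulVec_transpose, h, dotProduct_comm]

variable (A)

theorem isQuadraticModule_memQM : IsQuadraticModule {p | memQM A p} where
  one_mem := ⟨1, 0, fun _ => 1, Fin.elim0, by simp⟩
  add_mem := by
    rintro _ _ ⟨k, r, q, v, rfl⟩ ⟨k', r', q', v', rfl⟩
    refine ⟨k + k', r + r', Fin.append q q', Fin.append v v', ?_⟩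
    simp only [Fin.sum_univ_add, Fin.append_left, Fin.append_right]
    ring
  sq_mul_mem := by
    rintro a _ ⟨k, r, q, v, rfl⟩
    refine ⟨k, r, fun i => a * q i, fun j => a • v j, ?_⟩
    simp only [mul_add, Finset.mul_sum, mul_pow, vLv_eq, pencilPolyForm, mulVec_smul,
      dotProduct_smul, smul_dotProduct, smul_eq_mul]
    congr 1
    exact Finset.sum_congr rfl fun _ _ => by ring

theorem pencilPolyForm_self_mem (v : Fin m → MvPolynomial (Fin n) ℝ) :
    memQM A (pencilPolyForm A v v) :=
  ⟨0, 1, Fin.elim0, fun _ => v, by simp [vLv_eq]⟩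

theorem dotProduct_pencilEval_mulVec (x : Fin n → ℝ) (v w : Fin m → ℝ) :
    v ⬝ᵥ pencilEval A x *ᵥ w =
      pencilForm A v w 0 + ∑ i, x i * pencilForm A v w i.succ := by
  simp [pencilEval, pencilForm, add_mulVec, sum_mulVec, smul_mulVec, dotProduct_add,
    dotProduct_sum]

theorem eval_pencilPolyForm (x : Fin n → ℝ) (v w : Fin m → MvPolynomial (Fin n) ℝ) :
    eval x (pencilPolyForm A v w) =
      (fun a => eval x (v a)) ⬝ᵥ pencilEval A x *ᵥ fun a => eval x (w a) := by
  simp [pencilPolyForm, pencilPoly, pencilEval, dotProduct, mulVec, Matrix.sum_apply]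

theorem pencilPolyForm_C (v w : Fin m → ℝ) :
    pencilPolyForm A (fun a => C (v a)) (fun a => C (w a)) = affinePoly n (pencilForm A v w) := by
  refine MvPolynomial.funext fun x => ?_
  simp [eval_pencilPolyForm, dotProduct_pencilEval_mulVec, affinePoly_apply]

theorem eval_nonneg_of_memQM {p : MvPolynomial (Fin n) ℝ} (hp : memQM A p) {x : Fin n → ℝ}
    (hx : x ∈ specSet A) : 0 ≤ eval x p := by
  obtain ⟨k, r, q, v, rfl⟩ := hp
  simp only [map_add, map_sum, map_pow, vLv_eq, eval_pencilPolyForm]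
  have hx' : (pencilEval A x).PosSemidef := hx
  exact add_nonneg (Finset.sum_nonneg fun _ _ => sq_nonneg _)
    (Finset.sum_nonneg fun _ _ => by simpa using hx'.dotProduct_mulVec_nonneg _)

theorem affinePoly_pencilForm_mem_infinitesimalIdeal (hsymm : ∀ i, (A i).IsSymm) {v : Fin m → ℝ}
    (hv : affinePoly n (pencilForm A v v) ∈ (isQuadraticModule_memQM A).infinitesimalIdeal)
    (w : Fin m → ℝ) :
    affinePoly n (pencilForm A v w) ∈ (isQuadraticModule_memQM A).infinitesimalIdeal := by
  set hM := isQuadraticModule_memQM A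
  apply hM.mem_infinitesimalIdeal_of_neg_sq_mem
  rw [← pencilPolyForm_C] at hv ⊢
  set v' : Fin m → MvPolynomial (Fin n) ℝ := fun a => C (v a)
  set w' : Fin m → MvPolynomial (Fin n) ℝ := fun a => C (w a)
  set b := pencilPolyForm A v' w' with hb
  set p : MvPolynomial (Fin n) ℝ := -C (1 / 2) * (1 + pencilPolyForm A w' w')
  refine ⟨_, pencilPolyForm_self_mem A (p • v' + b • w'), _,
    Ideal.mul_mem_left _ (-p ^ 2) hv, ?_⟩
  have hexp : pencilPolyForm A (p • v' + b • w') (p • v' + b • w') =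
      p ^ 2 * pencilPolyForm A v' v' + p * b * pencilPolyForm A v' w' +
        p * b * pencilPolyForm A w' v' + b ^ 2 * pencilPolyForm A w' w' := by
    simp only [pencilPolyForm, mulVec_add, mulVec_smul, dotProduct_add, add_dotProduct,
      dotProduct_smul, smul_dotProduct, smul_eq_mul]
    ring
  rw [hexp, pencilPolyForm_comm hsymm w' v', ← hb]
  have hhalf : (C (1 / 2) : MvPolynomial (Fin n) ℝ) * 2 = 1 := by
    rw [← map_ofNat C 2, ← map_mul]; norm_num
  linear_combination (1 + pencilPolyForm A w' w') * b ^ 2 * hhalf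

/-- An affine polynomial that is nonnegative on the spectrahedron lies in the quadratic module
enlarged by its infinitesimal ideal. -/
theorem affinePoly_mem_enlarge (hsymm : ∀ i, (A i).IsSymm) {p : Fin (n + 1) → ℝ}
    (hp : ∀ x ∈ specSet A, 0 ≤ p 0 + ∑ i, x i * p i.succ) :
    affinePoly n p ∈ (isQuadraticModule_memQM A).enlarge := by
  set hM := isQuadraticModule_memQM A
  have hM' := hM.isQuadraticModule_enlarge
  by_contra hpM
  let E : Submodule ℝ (Fin (n + 1) → ℝ) :=
    (hM.infinitesimalIdeal.restrictScalars ℝ).comap (affinePoly n)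
  have hE {y} : y ∈ E ↔ affinePoly n y ∈ hM.infinitesimalIdeal := Iff.rfl
  let K : Set (Fin (n + 1) → ℝ) :=
    {y | ∃ t : ℝ, 0 ≤ t ∧ affinePoly n (y + t • p) ∈ hM.enlarge}
  have hKadd {y z} (hy : y ∈ K) (hz : z ∈ K) : y + z ∈ K := by
    obtain ⟨t, ht, hy⟩ := hy
    obtain ⟨s, hs, hz⟩ := hz
    refine ⟨t + s, add_nonneg ht hs, ?_⟩
    convert hM'.add_mem hy hz using 1
    rw [← map_add]
    congr 1
    module
  have hKsmul {c : ℝ} {y} (hc : 0 ≤ c) (hy : y ∈ K) : c • y ∈ K := by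
    obtain ⟨t, ht, hy⟩ := hy
    refine ⟨c * t, mul_nonneg hc ht, ?_⟩
    convert hM'.smul_mem hc hy using 1
    rw [← map_smul]
    congr 1
    module
  have hKmem {y} (hy : affinePoly n y ∈ hM.enlarge) : y ∈ K := ⟨0, le_rfl, by simpa using hy⟩
  have hEK {y} (hy : y ∈ E) : y ∈ K := hKmem (hM.infinitesimalIdeal_subset_enlarge hy)
  have hKE {y} (hy : y ∈ K) (hy' : -y ∈ K) : y ∈ E := by
    obtain ⟨t, ht, hy⟩ := hy
    obtain ⟨s, hs, hy'⟩ := hy'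
    have hts : t + s = 0 := by
      by_contra hne
      have hpos : 0 < t + s := lt_of_le_of_ne (add_nonneg ht hs) (Ne.symm hne)
      refine hpM ?_
      convert hM'.smul_mem (inv_nonneg.2 hpos.le) (hM'.add_mem hy hy') using 1
      rw [← map_add, ← map_smul]
      congr 1
      rw [show y + t • p + (-y + s • p) = (t + s) • p by module, inv_smul_smul₀ hne]
    obtain rfl : t = 0 := by linarith
    obtain rfl : s = 0 := by linarith
    exact hM.mem_infinitesimalIdeal_of_neg_mem (by simpa using hy) (by simpa using hy')
  let U : Submodule ℝ (Fin m → ℝ) :=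
    { carrier := {v | ∀ w, pencilForm A v w ∈ E}
      zero_mem' := fun w => by
        have : pencilForm A 0 w = 0 := by ext; simp [pencilForm]
        simp [this]
      add_mem' := fun {v v'} hv hv' w => by
        have : pencilForm A (v + v') w = pencilForm A v w + pencilForm A v' w := by
          ext; simp [pencilForm, add_dotProduct]
        rw [this]
        exact add_mem (hv w) (hv' w)
      smul_mem' := fun c v hv w => by
        have : pencilForm A (c • v) w = c • pencilForm A v w := by
          ext; simp [pencilForm]
        rw [this]
        exact E.smul_mem c (hv w) }
  obtain ⟨W, hUW⟩ := Submodule.exists_isCompl U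
  let e₀ : Fin (n + 1) → ℝ := Pi.single 0 1
  have he₀ : affinePoly n e₀ = 1 := by simp [affinePoly_apply, e₀]
  let B : Set (Fin m → ℝ) := Metric.sphere 0 1 ∩ W
  let G : Set (Fin (n + 1) → ℝ) := insert (-p) (insert e₀ ((fun w => pencilForm A w w) '' B))
  have hGcompact : IsCompact G := by
    have hB : IsCompact B := (isCompact_sphere 0 1).inter_right W.closed_of_finiteDimensional
    refine IsCompact.insert (IsCompact.insert (hB.image ?_) _) _
    unfold pencilForm
    fun_prop
  have hGsub : G ⊆ {y | y ∈ K ∧ -y ∉ K} := by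
    have hsub {y} (hy : y ∈ K) (hyE : y ∉ E) : y ∈ {y | y ∈ K ∧ -y ∉ K} :=
      ⟨hy, fun h => hyE (hKE hy h)⟩
    rintro y (rfl | rfl | ⟨w, ⟨hw1, hwW⟩, rfl⟩)
    · refine hsub ⟨1, zero_le_one, hM.infinitesimalIdeal_subset_enlarge (by simp)⟩ fun h => ?_
      exact hpM (hM.infinitesimalIdeal_subset_enlarge (hE.1 (by simpa using neg_mem h)))
    · refine hsub (hKmem (he₀ ▸ hM'.one_mem)) fun h => ?_
      rw [hE, he₀, ← Ideal.eq_top_iff_one] at h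
      exact hpM (hM.infinitesimalIdeal_subset_enlarge (h ▸ Submodule.mem_top))
    · refine hsub (hKmem (hM.subset_enlarge ?_)) fun h => ?_
      · rw [← pencilPolyForm_C]
        exact pencilPolyForm_self_mem A _
      · have hwU : w ∈ U := affinePoly_pencilForm_mem_infinitesimalIdeal A hsymm h
        have hw0 : w = 0 := (Submodule.disjoint_def.1 hUW.disjoint) w hwU hwW
        simp [hw0] at hw1
  have hdisj : Disjoint (E : Set (Fin (n + 1) → ℝ)) (convexHull ℝ G) := by
    refine Set.disjoint_left.2 fun y hy hyG => ?_
    exact (convexHull_min hGsub (convex_setOf_mem_and_neg_notMem hKadd hKsmul) hyG).2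
      (hEK (neg_mem hy))
  obtain ⟨φ, u, u', hφE, huu', hφG⟩ := geometric_hahn_banach_closed_compact E.convex
    E.closed_of_finiteDimensional (convex_convexHull ℝ G)
    hGcompact.convexHull_of_finiteDimensional hdisj
  have hu : 0 < u := by simpa using hφE 0 E.zero_mem
  have hφpos {y} (hy : y ∈ G) : 0 < φ y := by
    linarith [hφG y (subset_convexHull ℝ G hy)]
  have hφzero {y} (hy : y ∈ E) : φ y = 0 := by
    by_contra hne
    have := hφE ((u / φ y) • y) (E.smul_mem _ hy)
    rw [map_smul, smul_eq_mul, div_mul_cancel₀ _ hne] at this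
    exact this.false
  have hφe₀ : 0 < φ e₀ := hφpos (by simp [G])
  let x : Fin n → ℝ := fun i => φ (Pi.single i.succ 1) / φ e₀
  have hφx (y : Fin (n + 1) → ℝ) : φ y = φ e₀ * (y 0 + ∑ i, x i * y i.succ) := by
    have h := LinearMap.pi_apply_eq_sum_univ φ.toLinearMap y
    have hsingle (i : Fin (n + 1)) : (fun j => if i = j then (1 : ℝ) else 0) = Pi.single i 1 := by
      ext j
      simp [Pi.single_apply, eq_comm]
    simp only [ContinuousLinearMap.coe_coe, hsingle, Fin.sum_univ_succ, smul_eq_mul] at h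
    rw [h, mul_add, mul_comm, Finset.mul_sum]
    congr 1
    refine Finset.sum_congr rfl fun i _ => ?_
    simp only [x]
    field_simp
  have hφform (v : Fin m → ℝ) : 0 ≤ φ (pencilForm A v v) := by
    obtain ⟨a, ha, w, hw, rfl⟩ := Submodule.mem_sup.1 (hUW.sup_eq_top ▸ Submodule.mem_top (x := v))
    have hexp : pencilForm A (a + w) (a + w) =
        pencilForm A a (a + w) + pencilForm A a w + pencilForm A w w := by
      rw [pencilForm_comm hsymm a w]
      ext i
      simp only [pencilForm, add_dotProduct, mulVec_add, dotProduct_add, Pi.add_apply]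
      ring
    rw [hexp, map_add, map_add, hφzero (ha _), hφzero (ha _), zero_add, zero_add]
    rcases eq_or_ne w 0 with rfl | hw0
    · have : pencilForm A 0 0 = 0 := by ext; simp [pencilForm]
      simp [this]
    · have hnorm : ‖w‖ ≠ 0 := norm_ne_zero_iff.2 hw0
      have hB : ‖w‖⁻¹ • w ∈ B :=
        ⟨by simp [norm_smul, hnorm], W.smul_mem _ hw⟩
      have h := hφpos (y := pencilForm A (‖w‖⁻¹ • w) (‖w‖⁻¹ • w))
        (Or.inr (Or.inr ⟨_, hB, rfl⟩))
      have hscale : pencilForm A w w =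
          (‖w‖ ^ 2) • pencilForm A (‖w‖⁻¹ • w) (‖w‖⁻¹ • w) := by
        ext i
        simp only [pencilForm, mulVec_smul, dotProduct_smul, smul_dotProduct, Pi.smul_apply,
          smul_eq_mul]
        field_simp
      rw [hscale, map_smul, smul_eq_mul]
      positivity
  have hx : x ∈ specSet A := by
    refine Matrix.PosSemidef.of_dotProduct_mulVec_nonneg ?_ fun v => ?_
    · ext a b
      simp [pencilEval, Matrix.sum_apply, fun i => (hsymm i).apply a b]
    · have h := hφform v
      rw [hφx, ← dotProduct_pencilEval_mulVec] at h
      simpa using nonneg_of_mul_nonneg_right h hφe₀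
  have hneg : 0 < φ (-p) := hφpos (by simp [G])
  rw [map_neg, hφx] at hneg
  linarith [mul_nonneg hφe₀.le (hp x hx)]

theorem isBoundedElem_of_isBounded_specSet (hsymm : ∀ i, (A i).IsSymm)
    (hb : Bornology.IsBounded (specSet A)) (f : MvPolynomial (Fin n) ℝ) :
    IsQuadraticModule.IsBoundedElem {p | memQM A p} f := by
  set hM := isQuadraticModule_memQM A
  obtain ⟨r, hr0, hr⟩ := hb.exists_pos_norm_le
  have hX (i : Fin n) : IsQuadraticModule.IsBoundedElem {p | memQM A p} (X i) := by
    have haff (c : ℝ) (hc : |c| = 1) :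
        algebraMap ℝ (MvPolynomial (Fin n) ℝ) (r + 1) + C c * X i ∈ {p | memQM A p} := by
      have h := affinePoly_mem_enlarge A hsymm (p := r • Pi.single 0 1 + c • Pi.single i.succ 1)
        fun x hx => by
          have hxi : |c * x i| ≤ r := by
            rw [abs_mul, hc, one_mul]
            exact (norm_le_pi_norm x i).trans (hr x hx)
          simp [Pi.single_apply, Fin.succ_ne_zero]
          linarith [neg_abs_le (c * x i)]
      have h' := hM.add_algebraMap_mem_of_mem_enlarge h one_pos
      convert h' using 1
      simp [affinePoly, smul_eq_C_mul, algebraMap_eq]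
      ring
    refine ⟨r + 1, by positivity, ?_, ?_⟩
    · simpa using haff 1 (by simp)
    · simpa [sub_eq_add_neg] using haff (-1) (by simp)
  induction f using MvPolynomial.induction_on with
  | C a => exact hM.isBoundedElem_algebraMap a
  | add f g hf hg => exact hf.add hM hg
  | mul_X f i hf => exact hf.mul hM (hX i)

end Pencil

/-- **Theorem.** For a linear pencil `L`, the spectrahedron `S_L` is bounded if and only if
the quadratic module `M_L` is archimedean. -/
theorem spectrahedron_bounded_iff_archimedean
    (n m : ℕ) (A : Fin (n+1) → Matrix (Fin m) (Fin m) ℝ)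
    (hsymm : ∀ i, (A i).IsSymm) :
    Bornology.IsBounded (specSet A) ↔ archimedeanQM A := by
  have hM := isQuadraticModule_memQM A
  constructor
  · intro hb f
    obtain ⟨N, -, hN⟩ := (isBoundedElem_of_isBounded_specSet A hsymm hb f).exists_sub_sq_mem hM
    refine ⟨⌈N⌉₊, ?_⟩
    have h := hM.add_mem (hM.algebraMap_mem (sub_nonneg.2 (Nat.le_ceil N))) hN
    rwa [map_sub, map_natCast, sub_add_sub_cancel] at h
  · intro h
    rw [← Bornology.forall_isBounded_image_eval_iff]
    intro i
    obtain ⟨N, hN⟩ := h (X i)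
    refine (Metric.isBounded_Icc (-√N) √N).subset ?_
    rintro _ ⟨x, hx, rfl⟩
    have h0 := eval_nonneg_of_memQM A hN hx
    simp only [map_sub, map_natCast, map_pow, eval_X] at h0
    exact abs_le.1 (Real.abs_le_sqrt (by linarith))
end

section
/- Let L be a linear pencil in n variables with S_L nonempty. Then S_L is bounded (as a subset of ℝⁿ) if and only if the quadratic module M_L is archimedean. -/
open MvPolynomial Matrix

section QuadraticModule

variable {n m : ℕ} {A : Fin (n+1) → Matrix (Fin m) (Fin m) ℝ} {p q f g : MvPolynomial (Fin n) ℝ}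

theorem memQM_sq (p : MvPolynomial (Fin n) ℝ) : memQM A (p ^ 2) :=
  ⟨1, 0, fun _ => p, fun _ _ => 0, by simp⟩

theorem memQM_vLv (v : Fin m → MvPolynomial (Fin n) ℝ) : memQM A (vLv A v) :=
  ⟨0, 1, fun _ => 0, fun _ => v, by simp⟩

theorem memQM.add (hp : memQM A p) (hq : memQM A q) : memQM A (p + q) := by
  obtain ⟨k, r, s, v, rfl⟩ := hp
  obtain ⟨k', r', s', v', rfl⟩ := hq
  refine ⟨k + k', r + r', Fin.append s s', Fin.append v v', ?_⟩
  simp only [Fin.sum_univ_add, Fin.append_left, Fin.append_right]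
  ring

theorem memQM.sum {ι : Type*} (t : Finset ι) {F : ι → MvPolynomial (Fin n) ℝ}
    (hF : ∀ i ∈ t, memQM A (F i)) : memQM A (∑ i ∈ t, F i) :=
  Finset.sum_induction F (memQM A) (fun _ _ => memQM.add) (by simpa using memQM_sq (A := A) 0) hF

theorem vLv_mul (p : MvPolynomial (Fin n) ℝ) (v : Fin m → MvPolynomial (Fin n) ℝ) :
    vLv A (fun a => p * v a) = p ^ 2 * vLv A v := by
  simp only [vLv, Finset.mul_sum]
  exact Finset.sum_congr rfl fun a _ => Finset.sum_congr rfl fun b _ => by ring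

theorem memQM.sq_mul (hp : memQM A p) (q : MvPolynomial (Fin n) ℝ) : memQM A (q ^ 2 * p) := by
  obtain ⟨k, r, s, v, rfl⟩ := hp
  refine ⟨k, r, fun i => q * s i, fun j a => q * v j a, ?_⟩
  simp only [vLv_mul, mul_pow, mul_add, Finset.mul_sum]

theorem C_eq_sq_sqrt {c : ℝ} (hc : 0 ≤ c) :
    (C c : MvPolynomial (Fin n) ℝ) = C (√c) ^ 2 := by
  rw [← C_pow, Real.sq_sqrt hc]

theorem memQM_C {c : ℝ} (hc : 0 ≤ c) : memQM A (C c) := by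
  rw [C_eq_sq_sqrt hc]
  exact memQM_sq _

theorem memQM.C_mul (hp : memQM A p) {c : ℝ} (hc : 0 ≤ c) : memQM A (C c * p) := by
  rw [C_eq_sq_sqrt hc]
  exact hp.sq_mul _

/-- A polynomial whose square is bounded by a nonnegative constant modulo the quadratic module. -/
def IsBoundedQM (A : Fin (n+1) → Matrix (Fin m) (Fin m) ℝ) (f : MvPolynomial (Fin n) ℝ) : Prop :=
  ∃ N : ℝ, 0 ≤ N ∧ memQM A (C N - f ^ 2)

theorem isBoundedQM_C (c : ℝ) : IsBoundedQM A (C c) :=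
  ⟨c ^ 2, sq_nonneg c, by simpa using memQM_C (A := A) le_rfl⟩

theorem IsBoundedQM.add (hf : IsBoundedQM A f) (hg : IsBoundedQM A g) : IsBoundedQM A (f + g) := by
  obtain ⟨N, hN, hf⟩ := hf
  obtain ⟨M, hM, hg⟩ := hg
  refine ⟨2 * (N + M), by positivity, ?_⟩
  convert ((hf.add hg).C_mul zero_le_two).add (memQM_sq (f - g)) using 1
  simp only [C_mul, C_add, map_ofNat]
  ring

theorem IsBoundedQM.mul (hf : IsBoundedQM A f) (hg : IsBoundedQM A g) : IsBoundedQM A (f * g) := by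
  obtain ⟨N, hN, hf⟩ := hf
  obtain ⟨M, hM, hg⟩ := hg
  refine ⟨N * M, by positivity, ?_⟩
  convert (hg.sq_mul f).add (hf.C_mul hM) using 1
  rw [C_mul]
  ring

theorem isBoundedQM_of_memQM_add_of_memQM_sub {N : ℝ} (hN : 0 < N)
    (hadd : memQM A (C N + f)) (hsub : memQM A (C N - f)) : IsBoundedQM A f := by
  refine ⟨N ^ 2, by positivity, ?_⟩
  convert ((hadd.sq_mul (C N - f)).add (hsub.sq_mul (C N + f))).C_mul
    (show 0 ≤ (2 * N)⁻¹ by positivity) using 1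
  have h : (C (2 * N)⁻¹ : MvPolynomial (Fin n) ℝ) * (2 * C N) = 1 := by
    rw [← map_ofNat C 2, ← C_mul, ← C_mul, inv_mul_cancel₀ (by positivity), C_1]
  rw [C_pow]
  linear_combination (f ^ 2 - C N ^ 2) * h

theorem archimedeanQM_of_isBoundedQM_X (h : ∀ i, IsBoundedQM A (X i)) : archimedeanQM A := by
  intro f
  have hf : IsBoundedQM A f := by
    induction f using MvPolynomial.induction_on with
    | C c => exact isBoundedQM_C c
    | add p q hp hq => exact hp.add hq
    | mul_X p i hp => exact hp.mul (h i)
  obtain ⟨N, -, hN⟩ := hf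
  refine ⟨⌈N⌉₊, ?_⟩
  convert hN.add (memQM_C (sub_nonneg.2 (Nat.le_ceil N))) using 1
  rw [C_sub, map_natCast]
  ring

theorem eval_pencilPoly (x : Fin n → ℝ) (a b : Fin m) :
    eval x (pencilPoly A a b) = pencilEval A x a b := by
  simp [pencilPoly, pencilEval, Matrix.sum_apply]

theorem memQM.eval_nonneg (hp : memQM A p) {x : Fin n → ℝ} (hx : x ∈ specSet A) :
    0 ≤ eval x p := by
  obtain ⟨k, r, s, v, rfl⟩ := hp
  rw [map_add, map_sum, map_sum]
  refine add_nonneg (Finset.sum_nonneg fun i _ => ?_) (Finset.sum_nonneg fun j _ => ?_)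
  · rw [map_pow]
    positivity
  · have := hx.dotProduct_mulVec_nonneg fun a => eval x (v j a)
    simpa [vLv, eval_pencilPoly, dotProduct, mulVec, Finset.mul_sum, mul_assoc] using this

theorem archimedeanQM.isBounded_specSet (h : archimedeanQM A) :
    Bornology.IsBounded (specSet A) := by
  choose N hN using fun i => h (X i)
  refine (Bornology.IsBounded.pi fun i => Metric.isBounded_Icc (-√(N i)) (√(N i))).subset
    fun x hx i _ => ?_
  have := (hN i).eval_nonneg hx
  simp only [map_sub, map_natCast, map_pow, eval_X, sub_nonneg] at this
  exact abs_le.1 (Real.abs_le_sqrt this)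

theorem pencilPoly_symm (hsymm : ∀ i, (A i).IsSymm) (a b : Fin m) :
    pencilPoly A a b = pencilPoly A b a := by
  simp only [pencilPoly, (hsymm _).apply b a]

/-- Pairing the pencil with a positive semidefinite form gives an element of `M_L`. -/
theorem memQM_sum_C_mul_pencilPoly (hsymm : ∀ i, (A i).IsSymm) (P : Matrix (Fin m) (Fin m) ℝ)
    (hP : ∀ x : Fin m → ℝ, 0 ≤ ∑ a, ∑ b, P a b * (x a * x b)) :
    memQM A (∑ a, ∑ b, C (P a b) * pencilPoly A a b) := by
  have hpsd : (P + Pᵀ).PosSemidef := by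
    refine .of_dotProduct_mulVec_nonneg (by simp [IsHermitian, add_comm]) fun x => ?_
    have : star x ⬝ᵥ ((P + Pᵀ) *ᵥ x) = 2 * ∑ a, ∑ b, P a b * (x a * x b) := by
      rw [two_mul]
      nth_rw 2 [Finset.sum_comm]
      simp only [dotProduct, mulVec, Finset.mul_sum, ← Finset.sum_add_distrib]
      refine Finset.sum_congr rfl fun a _ => Finset.sum_congr rfl fun b _ => ?_
      simp only [Pi.star_apply, star_trivial, Matrix.add_apply, transpose_apply]
      ring
    rw [this]
    exact mul_nonneg zero_le_two (hP x)
  obtain ⟨Q, hQ⟩ : ∃ Q : Matrix (Fin m) (Fin m) ℝ, P + Pᵀ = Qᵀ * Q := by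
    open scoped MatrixOrder Matrix.Norms.L2Operator in
    obtain ⟨Q, hQ⟩ := CStarAlgebra.nonneg_iff_eq_star_mul_self.mp hpsd.nonneg
    exact ⟨Q, by simpa [star_eq_conjTranspose] using hQ⟩
  have hsum : ∑ k, vLv A (fun a => C (Q k a)) =
      2 * ∑ a, ∑ b, C (P a b) * pencilPoly A a b := by
    have hswap : ∑ a, ∑ b, C (P a b) * pencilPoly A a b =
        ∑ a, ∑ b, C (P b a) * pencilPoly A a b := by
      rw [Finset.sum_comm]
      exact Finset.sum_congr rfl fun a _ => Finset.sum_congr rfl fun b _ => by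
        rw [pencilPoly_symm hsymm]
    rw [two_mul]
    nth_rw 2 [hswap]
    simp only [vLv, ← Finset.sum_add_distrib]
    rw [Finset.sum_comm]
    refine Finset.sum_congr rfl fun a _ => ?_
    rw [Finset.sum_comm]
    refine Finset.sum_congr rfl fun b _ => ?_
    have hab : P a b + P b a = ∑ k, Q k a * Q k b := by
      simpa [mul_apply] using congrFun (congrFun hQ a) b
    rw [← add_mul, ← C_add, hab, map_sum, Finset.sum_mul]
    exact Finset.sum_congr rfl fun k _ => by rw [C_mul]; ring
  have hmem := (memQM.sum Finset.univ fun k _ => memQM_vLv (A := A) fun a => C (Q k a)).C_mul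
    (show (0 : ℝ) ≤ 2⁻¹ by norm_num)
  rw [hsum, ← mul_assoc, ← map_ofNat C 2, ← C_mul] at hmem
  simpa using hmem

end QuadraticModule

section Separation

variable {m : ℕ}

theorem Matrix.exists_eq_sum_mul (f : Matrix (Fin m) (Fin m) ℝ →ₗ[ℝ] ℝ) :
    ∃ B : Matrix (Fin m) (Fin m) ℝ, ∀ S, f S = ∑ a, ∑ b, B a b * S a b := by
  refine ⟨fun a b => f (single a b 1), fun S => ?_⟩
  conv_lhs => rw [matrix_eq_sum_single S]
  simp only [map_sum]
  refine Finset.sum_congr rfl fun a _ => Finset.sum_congr rfl fun b _ => ?_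
  rw [mul_comm, ← smul_eq_mul, ← map_smul, smul_single, smul_eq_mul, mul_one]

attribute [local instance] Matrix.normedAddCommGroup Matrix.normedSpace

theorem Matrix.convex_posSemidef_trace_one :
    Convex ℝ {S : Matrix (Fin m) (Fin m) ℝ | S.PosSemidef ∧ S.trace = 1} := by
  rintro S ⟨hS, hS'⟩ T ⟨hT, hT'⟩ s t hs ht hst
  exact ⟨(hS.smul hs).add (hT.smul ht), by simp [hS', hT', hst]⟩

theorem Matrix.PosSemidef.abs_apply_le_trace {S : Matrix (Fin m) (Fin m) ℝ} (hS : S.PosSemidef)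
    (a b : Fin m) : |S a b| ≤ S.trace := by
  have hdiag : ∀ c, 0 ≤ S c c := fun c => hS.diag_nonneg
  have hle : ∀ c, S c c ≤ S.trace := fun c =>
    Finset.single_le_sum (f := fun c => S c c) (fun c _ => hdiag c) (Finset.mem_univ c)
  have hsymm : S b a = S a b := by simpa using hS.1.apply a b
  have hpos := hS.dotProduct_mulVec_nonneg (Pi.single a 1 + Pi.single b 1)
  have hneg := hS.dotProduct_mulVec_nonneg (Pi.single a 1 - Pi.single b 1)
  simp [mulVec_add, mulVec_sub, add_dotProduct, sub_dotProduct, hsymm] at hpos hneg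
  rw [abs_le]
  constructor <;> linarith [hle a, hle b]

theorem Matrix.isCompact_posSemidef_trace_one :
    IsCompact {S : Matrix (Fin m) (Fin m) ℝ | S.PosSemidef ∧ S.trace = 1} := by
  have : ProperSpace (Matrix (Fin m) (Fin m) ℝ) := FiniteDimensional.proper_real _
  refine Metric.isCompact_of_isClosed_isBounded ?_ ?_
  · simp only [posSemidef_iff_dotProduct_mulVec, Set.ofPred_and, Set.ofPred_forall, IsHermitian]
    refine (IsClosed.inter (isClosed_eq (by fun_prop) (by fun_prop))
      (isClosed_iInter fun x => isClosed_le (by fun_prop) (by fun_prop))).inter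
      (isClosed_eq (by fun_prop) (by fun_prop))
  · refine isBounded_iff_forall_norm_le.2 ⟨1, fun S hS => ?_⟩
    exact (norm_le_iff zero_le_one).2 fun a b => hS.2 ▸ hS.1.abs_apply_le_trace a b

/-- A subspace of matrices without nonzero positive semidefinite element is orthogonal to
a positive definite form. -/
theorem Matrix.exists_pos_form_of_subspace (V : Submodule ℝ (Matrix (Fin m) (Fin m) ℝ))
    (hV : ∀ S ∈ V, S.PosSemidef → S = 0) :
    ∃ B : Matrix (Fin m) (Fin m) ℝ, ∃ u > 0, (∀ S ∈ V, ∑ a, ∑ b, B a b * S a b = 0) ∧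
      ∀ x : Fin m → ℝ, u * ∑ a, x a ^ 2 ≤ ∑ a, ∑ b, B a b * (x a * x b) := by
  have hdisj : Disjoint {S : Matrix (Fin m) (Fin m) ℝ | S.PosSemidef ∧ S.trace = 1} V := by
    rw [Set.disjoint_left]
    rintro S ⟨hS, htr⟩ hSV
    simp [hV S hSV hS] at htr
  have : LocallyConvexSpace ℝ (Matrix (Fin m) (Fin m) ℝ) :=
    inferInstanceAs (LocallyConvexSpace ℝ (Fin m → Fin m → ℝ))
  obtain ⟨f, u, v, hu, huv, hv⟩ := geometric_hahn_banach_compact_closed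
    convex_posSemidef_trace_one isCompact_posSemidef_trace_one V.convex
    V.closed_of_finiteDimensional hdisj
  have hv0 : v < 0 := by simpa using hv 0 V.zero_mem
  obtain ⟨B, hB⟩ := exists_eq_sum_mul (-f.toLinearMap)
  refine ⟨B, -u, by linarith, fun S hS => ?_, fun x => ?_⟩
  · rw [← hB]
    by_contra hne
    have hfS : f S ≠ 0 := by simpa using hne
    have := hv _ (V.smul_mem (v / f S) hS)
    rw [map_smul, smul_eq_mul, div_mul_cancel₀ _ hfS] at this
    exact this.false
  · have hx := hB (vecMulVec x x)
    simp only [vecMulVec_apply] at hx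
    rw [← hx]
    set t := ∑ a, x a ^ 2 with ht
    have htr : (vecMulVec x x).trace = t := by simp [trace, vecMulVec_apply, ht, sq]
    have ht0 : 0 ≤ t := by positivity
    have hpsd : (vecMulVec x x).PosSemidef := by simpa using posSemidef_vecMulVec_self_star x
    rcases ht0.eq_or_lt with h0 | hpos
    · rw [hpsd.trace_eq_zero_iff.1 (htr.trans h0.symm), ← h0]
      simp
    · have := hu (t⁻¹ • vecMulVec x x)
        ⟨hpsd.smul (by positivity), by rw [trace_smul, htr, smul_eq_mul, inv_mul_cancel₀ hpos.ne']⟩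
      rw [map_smul, smul_eq_mul, inv_mul_lt_iff₀ hpos] at this
      simp only [LinearMap.neg_apply, ContinuousLinearMap.coe_coe]
      linarith

theorem Matrix.exists_abs_form_le (S : Matrix (Fin m) (Fin m) ℝ) :
    ∃ K : ℝ, 0 ≤ K ∧ ∀ x : Fin m → ℝ,
      |∑ a, ∑ b, S a b * (x a * x b)| ≤ K * ∑ a, x a ^ 2 := by
  refine ⟨∑ a, ∑ b, |S a b|, by positivity, fun x => ?_⟩
  simp only [Finset.sum_mul]
  refine (Finset.abs_sum_le_sum_abs _ _).trans (Finset.sum_le_sum fun a _ => ?_)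
  refine (Finset.abs_sum_le_sum_abs _ _).trans (Finset.sum_le_sum fun b _ => ?_)
  rw [abs_mul]
  refine mul_le_mul_of_nonneg_left ?_ (abs_nonneg _)
  have hle : ∀ c, x c ^ 2 ≤ ∑ c, x c ^ 2 := fun c =>
    Finset.single_le_sum (f := fun c => x c ^ 2) (fun c _ => sq_nonneg _) (Finset.mem_univ c)
  rw [abs_le]
  constructor <;> nlinarith [hle a, hle b, sq_nonneg (x a + x b), sq_nonneg (x a - x b)]

end Separation

section Bounded

variable {n m : ℕ} {A : Fin (n+1) → Matrix (Fin m) (Fin m) ℝ}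

/-- A nonempty bounded spectrahedron has no nonzero recession direction. -/
theorem eq_zero_of_isBounded_specSet (hne : (specSet A).Nonempty)
    (hb : Bornology.IsBounded (specSet A)) {d : Fin n → ℝ}
    (hd : (∑ i, d i • A i.succ).PosSemidef) : d = 0 := by
  obtain ⟨x, hx⟩ := hne
  have hray : ∀ t : ℝ, 0 ≤ t → x + t • d ∈ specSet A := fun t ht => by
    have : pencilEval A (x + t • d) = pencilEval A x + t • ∑ i, d i • A i.succ := by
      simp only [pencilEval, Pi.add_apply, Pi.smul_apply, smul_eq_mul, add_smul, mul_smul,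
        Finset.sum_add_distrib, Finset.smul_sum, add_assoc]
    rw [specSet, Set.mem_ofPred_eq, this]
    exact PosSemidef.add hx (hd.smul ht)
  obtain ⟨R, hR⟩ := isBounded_iff_forall_norm_le.1 hb
  by_contra hd0
  have hdpos : 0 < ‖d‖ := norm_pos_iff.2 hd0
  have hR0 : 0 ≤ R := (norm_nonneg x).trans (hR x hx)
  have h1 := hR _ (hray ((R + ‖x‖ + 1) / ‖d‖) (by positivity))
  have h2 := norm_sub_le (x + ((R + ‖x‖ + 1) / ‖d‖) • d) x
  rw [add_sub_cancel_left, norm_smul, Real.norm_of_nonneg (by positivity),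
    div_mul_cancel₀ _ hdpos.ne'] at h2
  linarith

theorem sum_C_mul_pencilPoly (P : Matrix (Fin m) (Fin m) ℝ) :
    ∑ a, ∑ b, C (P a b) * pencilPoly A a b =
      C (∑ a, ∑ b, P a b * A 0 a b) +
        ∑ i : Fin n, X i * C (∑ a, ∑ b, P a b * A i.succ a b) := by
  simp only [pencilPoly, mul_add, Finset.sum_add_distrib, map_sum, C_mul, Finset.mul_sum]
  congr 1
  simp_rw [Finset.sum_comm (s := (Finset.univ : Finset (Fin n)))]
  exact Finset.sum_congr rfl fun a _ => Finset.sum_congr rfl fun b _ =>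
    Finset.sum_congr rfl fun i _ => by ring

theorem isBoundedQM_X_of_isBounded_specSet (hsymm : ∀ i, (A i).IsSymm)
    (hne : (specSet A).Nonempty) (hb : Bornology.IsBounded (specSet A)) (i : Fin n) :
    IsBoundedQM A (X i) := by
  set Φ : (Fin n → ℝ) →ₗ[ℝ] Matrix (Fin m) (Fin m) ℝ :=
    Fintype.linearCombination ℝ fun j => A j.succ with hΦ
  have hΦ_apply : ∀ d, Φ d = ∑ j, d j • A j.succ := fun d => rfl
  have hΦ_succ : ∀ j, Φ (Pi.single j 1) = A (Fin.succ j) := fun j => by simp [hΦ]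
  have hker : LinearMap.ker Φ = ⊥ := LinearMap.ker_eq_bot'.2 fun d hd =>
    eq_zero_of_isBounded_specSet hne hb (by rw [← hΦ_apply, hd]; exact .zero)
  obtain ⟨g, hg⟩ := Φ.exists_leftInverse_of_injective hker
  obtain ⟨T, hT⟩ := exists_eq_sum_mul (LinearMap.proj i ∘ₗ g)
  have hTsucc : ∀ j : Fin n, ∑ a, ∑ b, T a b * A j.succ a b = if j = i then 1 else 0 := fun j => by
    rw [← hT, ← hΦ_succ, LinearMap.comp_apply, ← LinearMap.comp_apply g, hg]
    simp [Pi.single_apply, eq_comm]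
  obtain ⟨B, u, hu, hBV, hBu⟩ := exists_pos_form_of_subspace (LinearMap.range Φ) (by
    rintro _ ⟨d, rfl⟩ hpsd
    rw [eq_zero_of_isBounded_specSet hne hb hpsd, map_zero])
  have hBsucc : ∀ j : Fin n, ∑ a, ∑ b, B a b * A j.succ a b = 0 := fun j =>
    hBV _ ⟨_, hΦ_succ j⟩
  obtain ⟨K, hK, hTK⟩ := exists_abs_form_le T
  set β := ∑ a, ∑ b, B a b * A 0 a b
  set τ := ∑ a, ∑ b, T a b * A 0 a b
  have hmem : ∀ s : ℝ, |s| = 1 → memQM A (C (K / u * β + s * τ) + C s * X i) := fun s hs => by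
    have hlin : ∀ S : Matrix (Fin m) (Fin m) ℝ,
        ∑ a, ∑ b, ((K / u) • B + s • T) a b * S a b =
          K / u * ∑ a, ∑ b, B a b * S a b + s * ∑ a, ∑ b, T a b * S a b := fun S => by
      simp only [Matrix.add_apply, Matrix.smul_apply, smul_eq_mul, add_mul,
        Finset.sum_add_distrib, Finset.mul_sum, mul_assoc]
    convert memQM_sum_C_mul_pencilPoly hsymm ((K / u) • B + s • T) fun x => ?_ using 1
    · rw [sum_C_mul_pencilPoly]
      have hX : ∑ j, (X j * C (K / u * 0 + s * if j = i then 1 else 0) :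
          MvPolynomial (Fin n) ℝ) = C s * X i := by
        rw [Finset.sum_eq_single i (fun j _ hj => by simp [hj]) (by simp)]
        simp [mul_comm]
      simp only [hlin, hBsucc, hTsucc, hX, β, τ]
    · rw [hlin fun a b => x a * x b]
      have h1 := mul_le_mul_of_nonneg_left (hBu x) (show 0 ≤ K / u by positivity)
      rw [← mul_assoc, div_mul_cancel₀ _ hu.ne'] at h1
      have h2 := neg_abs_le (s * ∑ a, ∑ b, T a b * (x a * x b))
      rw [abs_mul, hs, one_mul] at h2
      linarith [hTK x]
  have hbound : ∀ s : ℝ, |s| = 1 → memQM A (C (|K / u * β| + |τ| + 1) + C s * X i) := fun s hs => by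
    have hle : K / u * β + s * τ ≤ |K / u * β| + |τ| + 1 := by
      have := le_abs_self (s * τ)
      rw [abs_mul, hs, one_mul] at this
      linarith [le_abs_self (K / u * β)]
    convert (hmem s hs).add (memQM_C (sub_nonneg.2 hle)) using 1
    rw [C_sub]
    ring
  refine isBoundedQM_of_memQM_add_of_memQM_sub (N := |K / u * β| + |τ| + 1) (by positivity) ?_ ?_
  · simpa using hbound 1 (by simp)
  · simpa [sub_eq_add_neg] using hbound (-1) (by simp)

end Bounded

/-- **Lemma.** For a linear pencil `L` with nonempty spectrahedron `S_L`, the spectrahedron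
`S_L` is bounded if and only if the quadratic module `M_L` is archimedean. -/
theorem spectrahedron_bounded_iff_archimedean_of_nonempty
    (n m : ℕ) (A : Fin (n+1) → Matrix (Fin m) (Fin m) ℝ)
    (hsymm : ∀ i, (A i).IsSymm)
    (hne : (specSet A).Nonempty) :
    Bornology.IsBounded (specSet A) ↔ archimedeanQM A :=
  ⟨fun hb => archimedeanQM_of_isBoundedQM_X (isBoundedQM_X_of_isBounded_specSet hsymm hne hb),
    fun h => h.isBounded_specSet⟩
end
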